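/- Let Φ be an irreducible crystallographic root system which is not simply-laced, with affine Weyl group W. If there exist roots α_1,…,α_n ∈ Φ such that W = ⟨s_{α_1},…,s_{α_n}, s_{α_n,1}⟩, then α_n is a long root. -/

import Mathlib

open scoped RealInnerProductSpace

noncomputable section

variable {V : Type*} [NormedAddCommGroup V] [InnerProductSpace ℝ V]

/-- The coroot `α^∨ = 2α/(α|α)` of a vector `α`. -/
def coroot (α : V) : V := (2 / ⟪α, α⟫) • α

/-- The affine reflection `s_{α,k} : v ↦ v - ((v|α) - k)α^∨`, as a function. -/
def sAffFun (α : V) (k : ℝ) (v : V) : V := v - (⟪v, α⟫ - k) • coroot α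

theorem sAffFun_involutive (α : V) (k : ℝ) : Function.Involutive (sAffFun α k) := by
  intro v
  by_cases h : α = 0
  · simp [sAffFun, coroot, h]
  · have h2 : ⟪α, α⟫ ≠ 0 := by
      intro hz
      exact h (inner_self_eq_zero.mp hz)
    have hr : ⟪coroot α, α⟫ = 2 := by
      simp only [coroot, real_inner_smul_left]
      field_simp
    simp only [sAffFun, inner_sub_left, real_inner_smul_left, hr]
    have : ⟪v, α⟫ - (⟪v, α⟫ - k) * 2 - k = -(⟪v, α⟫ - k) := by ring
    rw [this, neg_smul, sub_neg_eq_add, sub_add_cancel]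

/-- The affine reflection `s_{α,k}` as a permutation of `V`. -/
def sAff (α : V) (k : ℝ) : Equiv.Perm V :=
  Function.Involutive.toPerm _ (sAffFun_involutive α k)

/-- The translation `Tr(x) : v ↦ v + x`, as a function. -/
def trFun (x : V) (v : V) : V := v + x

/-- The translation `Tr(x) : v ↦ v + x`, as a permutation of `V`. -/
def trPerm (x : V) : Equiv.Perm V := Equiv.addRight x

/-- A crystallographic (reduced) root system in a Euclidean space `V`. -/
structure IsCrystRootSystem (Φ : Set V) : Prop where
  finite : Φ.Finite
  nonempty : Φ.Nonempty
  ne_zero : ∀ α ∈ Φ, α ≠ 0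
  spanning : Submodule.span ℝ Φ = ⊤
  refl_mem : ∀ α ∈ Φ, ∀ β ∈ Φ, sAffFun α 0 β ∈ Φ
  reduced : ∀ α ∈ Φ, ∀ c : ℝ, c • α ∈ Φ → c = 1 ∨ c = -1
  cryst : ∀ α ∈ Φ, ∀ β ∈ Φ, ∃ n : ℤ, 2 * ⟪β, α⟫ / ⟪α, α⟫ = (n : ℝ)

/-- The (finite) Weyl group of `Φ`, generated by the reflections `s_α`. -/
def WeylGroup (Φ : Set V) : Subgroup (Equiv.Perm V) :=
  Subgroup.closure {g | ∃ α ∈ Φ, g = sAff α 0}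

/-- The affine Weyl group of `Φ`, generated by all affine reflections `s_{α,k}`, `k ∈ ℤ`. -/
def AffWeylGroup (Φ : Set V) : Subgroup (Equiv.Perm V) :=
  Subgroup.closure {g | ∃ α ∈ Φ, ∃ k : ℤ, g = sAff α k}

/-- The set of reflections of the affine Weyl group. -/
def AffReflections (Φ : Set V) : Set (Equiv.Perm V) :=
  {g | ∃ α ∈ Φ, ∃ k : ℤ, g = sAff α k}

/-- The coweight lattice `P(Φ^∨) = {x | (x|α) ∈ ℤ for all α ∈ Φ}`. -/
def coweightLattice (Φ : Set V) : Set V :=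
  {x | ∀ α ∈ Φ, ∃ n : ℤ, ⟪x, α⟫ = (n : ℝ)}

/-- `Φ` is irreducible: it admits no decomposition into two nonempty orthogonal parts. -/
def IsIrreducibleRS (Φ : Set V) : Prop :=
  ∀ Φ₁ Φ₂ : Set V, Φ₁ ∪ Φ₂ = Φ → (∀ α ∈ Φ₁, ∀ β ∈ Φ₂, ⟪α, β⟫ = 0) →
    Φ₁ = ∅ ∨ Φ₂ = ∅

/-- The lattice spanned by the coroots of the roots of squared length `a`. -/
def shortLat (Φ : Set V) (a : ℝ) : AddSubgroup V :=
  AddSubgroup.closure {x | ∃ β ∈ Φ, ⟪β, β⟫ = a ∧ x = coroot β}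

theorem sAffFun_zero_add (β x y : V) :
    sAffFun β 0 (x + y) = sAffFun β 0 x + sAffFun β 0 y := by
  simp only [sAffFun, inner_add_left, sub_zero, add_smul]; abel

theorem sAffFun_zero_smul (β x : V) (c : ℝ) :
    sAffFun β 0 (c • x) = c • sAffFun β 0 x := by
  simp only [sAffFun, real_inner_smul_left, sub_zero, smul_sub, mul_smul]

theorem sAffFun_zero_norm (β x : V) (hβ : β ≠ 0) :
    ⟪sAffFun β 0 x, sAffFun β 0 x⟫ = ⟪x, x⟫ := by
  have h2 : ⟪β, β⟫ ≠ 0 := fun hz => hβ (inner_self_eq_zero.mp hz)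
  simp only [sAffFun, coroot, sub_zero, inner_sub_left, inner_sub_right, real_inner_smul_left,
    real_inner_smul_right, real_inner_comm x β]
  field_simp
  ring

theorem shortLat_refl (Φ : Set V) (hΦ : IsCrystRootSystem Φ) (a : ℝ) (β : V) (hβ : β ∈ Φ)
    (x : V) (hx : x ∈ shortLat Φ a) : sAffFun β 0 x ∈ shortLat Φ a := by
  induction hx using AddSubgroup.closure_induction with
  | mem x hx =>
    obtain ⟨γ, hγ, hγa, rfl⟩ := hx
    have hn := sAffFun_zero_norm β γ (hΦ.ne_zero β hβ)
    refine AddSubgroup.subset_closure ⟨sAffFun β 0 γ, hΦ.refl_mem β hβ γ hγ, by rw [hn, hγa], ?_⟩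
    unfold coroot
    rw [hn, sAffFun_zero_smul]
  | zero => simp [sAffFun, zero_mem]
  | add x y _ _ h1 h2 => rw [sAffFun_zero_add]; exact add_mem h1 h2
  | neg x _ h =>
    have := sAffFun_zero_smul β x (-1)
    rw [neg_one_smul, neg_one_smul] at this
    rw [this]; exact neg_mem h

theorem shortLat_inner (Φ : Set V) (hΦ : IsCrystRootSystem Φ) (a : ℝ)
    (x : V) (hx : x ∈ shortLat Φ a) (y : V) (hy : y ∈ shortLat Φ a) :
    ∃ m : ℤ, ⟪x, y⟫ = m * (2 / a) := by
  induction hx using AddSubgroup.closure_induction with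
  | mem x hx =>
    obtain ⟨β, hβ, hβa, rfl⟩ := hx
    induction hy using AddSubgroup.closure_induction with
    | mem y hy =>
      obtain ⟨γ, hγ, hγa, rfl⟩ := hy
      obtain ⟨m, hm⟩ := hΦ.cryst γ hγ β hβ
      refine ⟨m, ?_⟩
      rw [← hm]
      simp only [coroot, real_inner_smul_left, real_inner_smul_right, hβa, hγa]
      ring
    | zero => exact ⟨0, by simp⟩
    | add x y _ _ h1 h2 =>
      obtain ⟨m, hm⟩ := h1
      obtain ⟨k, hk⟩ := h2
      exact ⟨m + k, by rw [inner_add_right, hm, hk]; push_cast; ring⟩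
    | neg x _ h =>
      obtain ⟨m, hm⟩ := h
      exact ⟨-m, by rw [inner_neg_right, hm]; push_cast; ring⟩
  | zero => exact ⟨0, by simp⟩
  | add x y _ _ h1 h2 =>
    obtain ⟨m, hm⟩ := h1
    obtain ⟨k, hk⟩ := h2
    exact ⟨m + k, by rw [inner_add_left, hm, hk]; push_cast; ring⟩
  | neg x _ h =>
    obtain ⟨m, hm⟩ := h
    exact ⟨-m, by rw [inner_neg_left, hm]; push_cast; ring⟩

theorem shortLat_norm (Φ : Set V) (hΦ : IsCrystRootSystem Φ) (a : ℝ) (ha : a ≠ 0)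
    (x : V) (hx : x ∈ shortLat Φ a) : ∃ m : ℤ, ⟪x, x⟫ = m * (4 / a) := by
  induction hx using AddSubgroup.closure_induction with
  | mem x hx =>
    obtain ⟨β, hβ, hβa, rfl⟩ := hx
    refine ⟨1, ?_⟩
    simp only [coroot, real_inner_smul_left, real_inner_smul_right, hβa]
    field_simp
    norm_num
  | zero => exact ⟨0, by simp⟩
  | add x y hx hy h1 h2 =>
    obtain ⟨m, hm⟩ := h1
    obtain ⟨k, hk⟩ := h2
    obtain ⟨l, hl⟩ := shortLat_inner Φ hΦ a x hx y hy
    refine ⟨m + k + l, ?_⟩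
    rw [real_inner_add_add_self, hm, hk, hl]; push_cast; ring
  | neg x _ h =>
    obtain ⟨m, hm⟩ := h
    exact ⟨m, by rw [inner_neg_neg, hm]⟩

theorem statement_15 (Φ : Set V) (hΦ : IsCrystRootSystem Φ) (hirr : IsIrreducibleRS Φ)
    (n : ℕ) (hn : 0 < n) (hrank : Module.finrank ℝ V = n)
    (a b : ℝ) (hab : a < b)
    (hall : ∀ γ ∈ Φ, ⟪γ, γ⟫ = a ∨ ⟪γ, γ⟫ = b)
    (hshort : ∃ γ ∈ Φ, ⟪γ, γ⟫ = a) (hlong : ∃ γ ∈ Φ, ⟪γ, γ⟫ = b)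
    (α : Fin n → V) (hα : ∀ i, α i ∈ Φ)
    (hgen : AffWeylGroup Φ = Subgroup.closure
      ((Set.range fun i => sAff (α i) 0) ∪ {sAff (α ⟨n - 1, by omega⟩) 1})) :
    ⟪α ⟨n - 1, by omega⟩, α ⟨n - 1, by omega⟩⟫ = b := by
  rcases hall _ (hα ⟨n - 1, by omega⟩) with hs | hl
  swap
  · exact hl
  exfalso
  obtain ⟨γ, hγ, hγb⟩ := hlong
  have ha : 0 < a := by
    rw [← hs]
    exact real_inner_self_pos.mpr (hΦ.ne_zero _ (hα _))
  have key : ∀ g ∈ AffWeylGroup Φ, ∀ x, x ∈ shortLat Φ a ↔ g x ∈ shortLat Φ a := by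
    intro g hg
    rw [hgen] at hg
    induction hg using Subgroup.closure_induction with
    | mem g hg =>
      have hfwd : (∀ x ∈ shortLat Φ a, g x ∈ shortLat Φ a) ∧ ∀ x, g (g x) = x := by
        rcases hg with ⟨i, rfl⟩ | hg
        · exact ⟨fun x hx => shortLat_refl Φ hΦ a _ (hα i) x hx, sAffFun_involutive _ _⟩
        · rw [Set.mem_singleton_iff] at hg
          subst hg
          refine ⟨fun x hx => ?_, sAffFun_involutive _ _⟩
          have h1 := shortLat_refl Φ hΦ a _ (hα ⟨n - 1, by omega⟩) x hx
          have h2 : coroot (α ⟨n - 1, by omega⟩) ∈ shortLat Φ a :=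
            AddSubgroup.subset_closure ⟨_, hα _, hs, rfl⟩
          have h3 := add_mem h1 h2
          have h4 : sAff (α ⟨n - 1, by omega⟩) 1 x = sAffFun (α ⟨n - 1, by omega⟩) 0 x
              + coroot (α ⟨n - 1, by omega⟩) := by
            change sAffFun _ 1 x = _
            simp only [sAffFun, sub_smul, one_smul, sub_zero]
            abel
          rw [h4]; exact h3
      intro x
      refine ⟨hfwd.1 x, fun h => ?_⟩
      have := hfwd.1 _ h
      rwa [hfwd.2] at this
    | one => intro x; rfl
    | mul g h _ _ h1 h2 => intro x; rw [Equiv.Perm.mul_apply, ← h1, ← h2]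
    | inv g _ h => intro x; rw [h (g⁻¹ x), show g (g⁻¹ x) = x from g.apply_symm_apply x]
  have hmem : sAff γ 1 ∈ AffWeylGroup Φ := Subgroup.subset_closure ⟨γ, hγ, 1, by simp⟩
  have h0 := (key _ hmem 0).mp (zero_mem _)
  have h1 : sAff γ 1 0 = coroot γ := by
    change sAffFun γ 1 0 = _
    simp [sAffFun]
  rw [h1] at h0
  obtain ⟨m, hm⟩ := shortLat_norm Φ hΦ a ha.ne' _ h0
  have hb : 0 < b := ha.trans hab
  simp only [coroot, real_inner_smul_left, real_inner_smul_right, hγb] at hm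
  have h5 : a = m * b := by
    field_simp at hm
    linarith
  have h6 : (0 : ℝ) < m := by
    by_contra hc
    nlinarith
  have h7 : (m : ℝ) < 1 := by
    by_contra hc
    nlinarith
  have h8 : 0 < m := by exact_mod_cast h6
  have h9 : m < 1 := by exact_mod_cast h7
  omega


end
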